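/- Let q be a complex number with |q| < 1 and let a, b, c, d be complex numbers with max{|a|,|b|,|c|,|d|} < 1. Then ∫₀^π h(cos θ; 1, -1, q^{1/2}, -q^{1/2}) / h(cos θ; a, b, c, d) dθ = 2π (abcd; q)_∞ / ((q; q)_∞ (ab; q)_∞ (ac; q)_∞ (ad; q)_∞ (bc; q)_∞ (bd; q)_∞ (cd; q)_∞). (The Askey–Wilson integral.) -/

import Mathlib

open Complex MeasureTheory

/-- The q-shifted factorial `(x; q)_∞ = ∏_{k=0}^∞ (1 - x q^k)`. -/
noncomputable def qp (q x : ℂ) : ℂ := ∏' k : ℕ, (1 - x * q ^ k)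

/-- For `x = cos θ`, `h(x; λ) = (λ e^{iθ}; q)_∞ (λ e^{-iθ}; q)_∞`. -/
noncomputable def hh (q : ℂ) (θ : ℝ) (l : ℂ) : ℂ :=
  qp q (l * Complex.exp ((θ : ℂ) * Complex.I)) *
    qp q (l * Complex.exp (-((θ : ℂ) * Complex.I)))

lemma qp_summ {q : ℂ} (hq : ‖q‖ < 1) (x : ℂ) : Summable fun k : ℕ => ‖-(x * q ^ k)‖ := by
  simp only [norm_neg, norm_mul, norm_pow]
  exact (summable_geometric_of_lt_one (norm_nonneg _) hq).mul_left _

lemma qp_mult {q : ℂ} (hq : ‖q‖ < 1) (x : ℂ) : Multipliable fun k : ℕ => (1 - x * q ^ k) := by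
  simpa [sub_eq_add_neg] using multipliable_one_add_of_summable (qp_summ hq x)

lemma qp_succ {q : ℂ} (hq : ‖q‖ < 1) (x : ℂ) : qp q x = (1 - x) * qp q (x * q) := by
  have h2 : (fun k : ℕ => (1 - x * q ^ (k + 1))) = fun k => 1 - (x * q) * q ^ k := by
    funext k; ring
  have h : Multipliable fun k : ℕ => (1 - x * q ^ (k + 1)) := by
    rw [h2]; exact qp_mult hq _
  have h3 : ∏' k : ℕ, (1 - x * q ^ k) = (1 - x * q ^ 0) * ∏' k : ℕ, (1 - x * q ^ (k + 1)) :=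
    tprod_eq_zero_mul' (f := fun k : ℕ => 1 - x * q ^ k) h
  rw [h2, pow_zero, mul_one] at h3
  exact h3

lemma qp_ne {q : ℂ} (hq : ‖q‖ < 1) {x : ℂ} (hx : ‖x‖ < 1) : qp q x ≠ 0 := by
  unfold qp
  simp only [sub_eq_add_neg]
  refine tprod_one_add_ne_zero_of_summable ?_ (qp_summ hq x)
  intro i h
  have : x * q ^ i = 1 := by linear_combination -h
  have h1 : ‖x * q ^ i‖ = 1 := by rw [this]; simp
  rw [norm_mul, norm_pow] at h1
  have : ‖q‖ ^ i ≤ 1 := pow_le_one₀ (norm_nonneg _) hq.le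
  nlinarith [norm_nonneg x, norm_nonneg q]

lemma qp_diff {q : ℂ} (hq : ‖q‖ < 1) : Differentiable ℂ (qp q) := by
  intro x
  have hS : IsOpen (Metric.ball (0 : ℂ) (‖x‖ + 1)) := Metric.isOpen_ball
  have H : HasProdLocallyUniformlyOn (fun (k : ℕ) (y : ℂ) => 1 + -(y * q ^ k))
      (fun y => ∏' k, (1 + -(y * q ^ k))) (Metric.ball (0 : ℂ) (‖x‖ + 1)) := by
    refine Summable.hasProdLocallyUniformlyOn_nat_one_add hS
      (u := fun k => (‖x‖ + 1) * ‖q‖ ^ k)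
      ((summable_geometric_of_lt_one (norm_nonneg _) hq).mul_left _) ?_ ?_
    · refine Filter.Eventually.of_forall fun n y hy => ?_
      simp only [norm_neg, norm_mul, norm_pow]
      have : ‖y‖ < ‖x‖ + 1 := by simpa using hy
      gcongr
    · intro n; fun_prop
  have D := H.differentiableOn (Filter.Eventually.of_forall fun s => by fun_prop) hS
  have := D.differentiableAt (hS.mem_nhds (x := x) (by simp))
  have e : qp q = fun y => ∏' k : ℕ, (1 + -(y * q ^ k)) := by
    funext y; simp only [qp, sub_eq_add_neg]
  rw [e]
  exact this

lemma qp_cont {q : ℂ} (hq : ‖q‖ < 1) : Continuous (qp q) := (qp_diff hq).continuous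

lemma qp_dup {q u : ℂ} (hq : ‖q‖ < 1) (hu : u ^ 2 = q) (z : ℂ) :
    qp q z * qp q (-z) * qp q (u * z) * qp q (-u * z) = qp q (z ^ 2) := by
  have hm := fun x => qp_mult hq x
  unfold qp
  rw [← tprod_even_mul_odd (f := fun k => 1 - z ^ 2 * q ^ k)]
  · rw [mul_assoc, ← (hm z).tprod_mul (hm (-z)), ← (hm (u * z)).tprod_mul (hm (-u * z))]
    congr 1
    · congr 1; funext k; ring
    · congr 1; funext k; rw [← hu]; ring
  · convert (hm z).mul (hm (-z)) using 2; ring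
  · convert (hm (u * z)).mul (hm (-u * z)) using 2; rw [← hu]; ring

lemma qp_const {q u : ℂ} (hq : ‖q‖ < 1) (hu : u ^ 2 = q) :
    qp q (q * -q * u * -u) = qp q q * qp q (q * -q) * qp q (q * u) * qp q (q * -u) *
          qp q (-q * u) * qp q (-q * -u) * qp q (u * -u) := by
  have h1 := qp_dup hq hu u
  have h2 := qp_dup hq hu q
  have h3 := qp_succ hq u
  have h4 := qp_succ hq (-u)
  have h5 := qp_succ hq (-q)
  have h6 := qp_succ hq (q ^ 2)
  have hqq := qp_ne hq hq
  have h7 : (1 - q ^ 2) ≠ 0 := by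
    intro h
    have h8 : q ^ 2 = 1 := by linear_combination -h
    have : ‖q‖ ^ 2 = 1 := by rw [← norm_pow, h8]; simp
    nlinarith [norm_nonneg q]
  have e1 : -u * u = -q := by rw [← hu]; ring
  have e2 : q * -q * u * -u = q ^ 2 * q := by rw [← hu]; ring
  have e3 : u * -u = -q := by rw [← hu]; ring
  have e4 : u * u = q := by rw [← hu]; ring
  have e5 : q * u = u * q := by ring
  have e6 : q * -u = -u * q := by ring
  have e7 : -q * u = -u * q := by ring
  have e8 : -q * -u = u * q := by ring
  have e9 : q * -q = -q * q := by ring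
  rw [e1, hu, e4] at h1
  rw [e2, e3, e5, e6, e7, e8, e9]
  generalize qp q (u * q) = A at *
  generalize qp q (-u * q) = B at *
  generalize qp q (q ^ 2 * q) = C at *
  generalize qp q (-q * q) = D at *
  generalize qp q q = Q at *
  have h8 : (1 - q ^ 2) * (A * B * D) = 1 := by
    apply mul_right_cancel₀ hqq
    rw [h3, h4, h5] at h1
    rw [← hu] at h1 ⊢
    linear_combination h1
  rw [h6] at h2
  apply mul_left_cancel₀ h7
  linear_combination -h2 - Q * qp q (-q) * A * B * h8

noncomputable def SS (q a b c d z w : ℂ) : ℂ :=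
  qp q (z ^ 2) * qp q (w ^ 2) / ((qp q (a * z) * qp q (a * w)) * (qp q (b * z) * qp q (b * w)) *
    (qp q (c * z) * qp q (c * w)) * (qp q (d * z) * qp q (d * w)))

noncomputable def GG (q a b c d z w : ℂ) : ℂ :=
  z * qp q (z ^ 2) * qp q (q * w ^ 2) /
    ((qp q (a * z) * qp q (a * w * q)) * (qp q (b * z) * qp q (b * w * q)) *
    (qp q (c * z) * qp q (c * w * q)) * (qp q (d * z) * qp q (d * w * q)))

noncomputable def FF (q a b c d z : ℂ) : ℂ :=
  z * qp q (z ^ 2) * qp q (q * (q * z⁻¹ ^ 2)) /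
    ((qp q (a * z) * qp q (a * (q * z⁻¹))) * (qp q (b * z) * qp q (b * (q * z⁻¹))) *
    (qp q (c * z) * qp q (c * (q * z⁻¹))) * (qp q (d * z) * qp q (d * (q * z⁻¹))))

lemma nrm_lt {a z : ℂ} (ha : ‖a‖ < 1) (hz : ‖z‖ ≤ 1) : ‖a * z‖ < 1 := by
  rw [norm_mul]
  nlinarith [norm_nonneg a, norm_nonneg z]

lemma poly_id (a b c d : ℂ) {z w : ℂ} (hzw : z * w = 1) :
    z * (1 - z ^ 2) * ((1 - a * w) * (1 - b * w) * (1 - c * w) * (1 - d * w)) +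
    w * (1 - w ^ 2) * ((1 - a * z) * (1 - b * z) * (1 - c * z) * (1 - d * z)) =
    ((1 - z ^ 2) * (1 - w ^ 2)) * ((1 - a * b * c * d) * (z + w) -
        (a + b + c + d - (a * b * c + a * b * d + a * c * d + b * c * d))) := by
  have hz0 : z ≠ 0 := left_ne_zero_of_mul_eq_one hzw
  obtain rfl : w = z⁻¹ := eq_inv_of_mul_eq_one_right hzw
  field_simp
  ring

set_option maxHeartbeats 1000000 in
lemma GG_sym {q a b c d z w : ℂ} (hq : ‖q‖ < 1)
    (ha : ‖a‖ < 1) (hb : ‖b‖ < 1) (hc : ‖c‖ < 1) (hd : ‖d‖ < 1) (hz : ‖z‖ ≤ 1) (hw : ‖w‖ ≤ 1)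
    (hzw : z * w = 1) :
    GG q a b c d z w + GG q a b c d w z = SS q a b c d z w *
      ((1 - a * b * c * d) * (z + w) -
        (a + b + c + d - (a * b * c + a * b * d + a * c * d + b * c * d))) := by
  have key : ∀ t : ℂ, ‖t‖ < 1 → ∀ y : ℂ, ‖y‖ ≤ 1 → qp q (t * y) = (1 - t * y) * qp q (t * y * q) ∧
      (1 - t * y) ≠ 0 ∧ qp q (t * y * q) ≠ 0 := by
    intro t ht y hy
    have h := qp_succ hq (t * y)
    have h2 := qp_ne hq (nrm_lt ht hy)
    rw [h] at h2
    exact ⟨h, left_ne_zero_of_mul h2, right_ne_zero_of_mul h2⟩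
  obtain ⟨a1, a2, a3⟩ := key a ha z hz
  obtain ⟨a4, a5, a6⟩ := key a ha w hw
  obtain ⟨b1, b2, b3⟩ := key b hb z hz
  obtain ⟨b4, b5, b6⟩ := key b hb w hw
  obtain ⟨c1, c2, c3⟩ := key c hc z hz
  obtain ⟨c4, c5, c6⟩ := key c hc w hw
  obtain ⟨d1, d2, d3⟩ := key d hd z hz
  obtain ⟨d4, d5, d6⟩ := key d hd w hw
  have hz2 := qp_succ hq (z ^ 2)
  have hw2 := qp_succ hq (w ^ 2)
  unfold GG SS
  rw [a1, a4, b1, b4, c1, c4, d1, d4, hz2, hw2, mul_comm q (w ^ 2), mul_comm q (z ^ 2)]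
  generalize qp q (a * z * q) = A1 at *
  generalize qp q (a * w * q) = A2 at *
  generalize qp q (b * z * q) = B1 at *
  generalize qp q (b * w * q) = B2 at *
  generalize qp q (c * z * q) = C1 at *
  generalize qp q (c * w * q) = C2 at *
  generalize qp q (d * z * q) = D1 at *
  generalize qp q (d * w * q) = D2 at *
  generalize qp q (z ^ 2 * q) = Z at *
  generalize qp q (w ^ 2 * q) = W at *
  have e1 : z * ((1 - z ^ 2) * Z) * W / ((1 - a * z) * A1 * A2 * ((1 - b * z) * B1 * B2) *
      ((1 - c * z) * C1 * C2) * ((1 - d * z) * D1 * D2)) =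
      Z * W / (A1 * A2 * B1 * B2 * C1 * C2 * D1 * D2 * ((1 - a * z) * (1 - a * w) * (1 - b * z) *
       (1 - b * w) * (1 - c * z) * (1 - c * w) * (1 - d * z) * (1 - d * w))) *
      (z * (1 - z ^ 2) * ((1 - a * w) * (1 - b * w) * (1 - c * w) * (1 - d * w))) := by
    rw [div_mul_eq_mul_div, ← mul_div_mul_right _ _ (mul_ne_zero (mul_ne_zero (mul_ne_zero a5 b5) c5) d5)]
    congr 1 <;> ring
  have e2 : w * ((1 - w ^ 2) * W) * Z / ((1 - a * w) * A2 * A1 * ((1 - b * w) * B2 * B1) *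
      ((1 - c * w) * C2 * C1) * ((1 - d * w) * D2 * D1)) =
      Z * W / (A1 * A2 * B1 * B2 * C1 * C2 * D1 * D2 * ((1 - a * z) * (1 - a * w) * (1 - b * z) *
       (1 - b * w) * (1 - c * z) * (1 - c * w) * (1 - d * z) * (1 - d * w))) *
      (w * (1 - w ^ 2) * ((1 - a * z) * (1 - b * z) * (1 - c * z) * (1 - d * z))) := by
    rw [div_mul_eq_mul_div, ← mul_div_mul_right _ _ (mul_ne_zero (mul_ne_zero (mul_ne_zero a2 b2) c2) d2)]
    congr 1 <;> ring
  have e3 : (1 - z ^ 2) * Z * ((1 - w ^ 2) * W) / ((1 - a * z) * A1 * ((1 - a * w) * A2) *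
      ((1 - b * z) * B1 * ((1 - b * w) * B2)) *
      ((1 - c * z) * C1 * ((1 - c * w) * C2)) * ((1 - d * z) * D1 * ((1 - d * w) * D2))) =
      Z * W / (A1 * A2 * B1 * B2 * C1 * C2 * D1 * D2 * ((1 - a * z) * (1 - a * w) * (1 - b * z) *
       (1 - b * w) * (1 - c * z) * (1 - c * w) * (1 - d * z) * (1 - d * w))) *
      ((1 - z ^ 2) * (1 - w ^ 2)) := by
    rw [div_mul_eq_mul_div]
    congr 1 <;> ring
  rw [e1, e2, e3, ← mul_add, poly_id a b c d hzw, ← mul_assoc]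

lemma GG_FF {q a b c d z : ℂ} (hq : ‖q‖ < 1) :
    GG q a b c d z z⁻¹ = FF q a b c d z - q * z⁻¹ ^ 2 * FF q a b c d z := by
  unfold GG FF
  rw [qp_succ hq (q * z⁻¹ ^ 2), mul_comm (q * z⁻¹ ^ 2) q]
  simp only [mul_assoc, mul_comm q z⁻¹]
  ring

lemma FF_inv {q a b c d z : ℂ} (hq0 : q ≠ 0) (hz : z ≠ 0) :
    FF q a b c d (q * z⁻¹) = q * z⁻¹ ^ 2 * FF q a b c d z := by
  have e : (q * (q * z⁻¹)⁻¹) = z := by field_simp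
  have e2 : q * (q * (q * z⁻¹)⁻¹ ^ 2) = z ^ 2 := by field_simp
  have e3 : q * (q * z⁻¹ ^ 2) = (q * z⁻¹) ^ 2 := by field_simp
  unfold FF
  rw [e, e2, e3]
  field_simp

lemma circ_eq (f : ℂ → ℂ) {R : ℝ} (hR : R ≠ 0) :
    (∮ z in C(0, R), (z - 0)⁻¹ • f z) = I * ∫ θ in (0:ℝ)..2 * Real.pi, f (circleMap 0 R θ) := by
  rw [circleIntegral, ← intervalIntegral.integral_const_mul]
  congr 1
  funext θ
  have : circleMap 0 R θ ≠ 0 := circleMap_ne_center hR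
  simp only [deriv_circleMap, sub_zero, smul_eq_mul]
  field_simp

lemma FF_diff {q a b c d z : ℂ} (hq : ‖q‖ < 1)
    (ha : ‖a‖ < 1) (hb : ‖b‖ < 1) (hc : ‖c‖ < 1) (hd : ‖d‖ < 1)
    (hz0 : z ≠ 0) (hz : ‖z‖ ≤ 1) (hqz : ‖q‖ ≤ ‖z‖) : DifferentiableAt ℂ (FF q a b c d) z := by
  have hw : ‖q * z⁻¹‖ ≤ 1 := by
    rw [norm_mul, norm_inv, ← div_eq_mul_inv]
    exact div_le_one_of_le₀ hqz (norm_nonneg _)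
  have hqd := qp_diff hq
  have hne : ∀ t : ℂ, ‖t‖ < 1 → qp q (t * z) * qp q (t * (q * z⁻¹)) ≠ 0 := fun t ht =>
    mul_ne_zero (qp_ne hq (nrm_lt ht hz)) (qp_ne hq (nrm_lt ht hw))
  have hi : DifferentiableAt ℂ (fun z : ℂ => z⁻¹) z := differentiableAt_inv hz0
  have h1 : ∀ t : ℂ, DifferentiableAt ℂ (fun z => qp q (t * z) * qp q (t * (q * z⁻¹))) z := by
    intro t
    refine DifferentiableAt.mul ?_ ?_
    · exact (hqd _).comp z (by fun_prop)
    · exact (hqd _).comp z ((hi.const_mul _).const_mul _)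
  unfold FF
  refine DifferentiableAt.div ?_ ((((h1 a).mul (h1 b)).mul (h1 c)).mul (h1 d))
    (mul_ne_zero (mul_ne_zero (mul_ne_zero (hne a ha) (hne b hb)) (hne c hc)) (hne d hd))
  refine DifferentiableAt.mul (DifferentiableAt.mul (by fun_prop) ?_) ?_
  · exact (hqd _).comp z (by fun_prop)
  · exact (hqd _).comp z (((hi.pow 2).const_mul _).const_mul _)

lemma FF_int {q a b c d : ℂ} (hq : ‖q‖ < 1) (hq0 : q ≠ 0)
    (ha : ‖a‖ < 1) (hb : ‖b‖ < 1) (hc : ‖c‖ < 1) (hd : ‖d‖ < 1) :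
    ∫ θ in (0:ℝ)..2 * Real.pi, FF q a b c d (circleMap 0 1 θ) =
    ∫ θ in (0:ℝ)..2 * Real.pi, FF q a b c d (q * (circleMap 0 1 θ)⁻¹) := by
  have hqp : 0 < ‖q‖ := norm_pos_iff.2 hq0
  have h := Complex.circleIntegral_sub_center_inv_smul_eq_of_differentiable_on_annulus_off_countable
    (c := 0) (f := FF q a b c d) (s := ∅) hqp hq.le Set.countable_empty ?_ ?_
  · rw [circ_eq _ one_ne_zero, circ_eq _ hqp.ne'] at h
    rw [mul_left_cancel₀ I_ne_zero h]
    have e : ∀ θ : ℝ, q * (circleMap 0 1 θ)⁻¹ = circleMap 0 ‖q‖ (q.arg - θ) := by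
      intro θ
      simp only [circleMap, zero_add, ofReal_one, one_mul, ofReal_sub, sub_mul, Complex.exp_sub]
      rw [← mul_div_assoc, Complex.norm_mul_exp_arg_mul_I, div_eq_mul_inv]
    simp only [e]
    rw [intervalIntegral.integral_comp_sub_left (fun x => FF q a b c d (circleMap 0 ‖q‖ x))]
    have hp : Function.Periodic (fun x => FF q a b c d (circleMap 0 ‖q‖ x)) (2 * Real.pi) :=
      (periodic_circleMap 0 ‖q‖).comp (FF q a b c d)
    have := hp.intervalIntegral_add_eq 0 (q.arg - 2 * Real.pi)
    simpa using this
  · intro z hz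
    simp only [Set.mem_sdiff, Metric.mem_closedBall, dist_zero_right, Metric.mem_ball, not_lt] at hz
    exact (FF_diff hq ha hb hc hd (norm_pos_iff.1 (hqp.trans_le hz.2)) hz.1
      hz.2).continuousAt.continuousWithinAt
  · intro z hz
    simp only [Set.mem_sdiff, Metric.mem_closedBall, dist_zero_right, Metric.mem_ball, not_le] at hz
    exact FF_diff hq ha hb hc hd (norm_pos_iff.1 (hqp.trans hz.1.2)) hz.1.1.le hz.1.2.le

lemma GG_cont {q a b c d : ℂ} (hq : ‖q‖ < 1)
    (ha : ‖a‖ < 1) (hb : ‖b‖ < 1) (hc : ‖c‖ < 1) (hd : ‖d‖ < 1) {z w : ℝ → ℂ}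
    (hz : Continuous z) (hw : Continuous w) (hz1 : ∀ t, ‖z t‖ ≤ 1) (hw1 : ∀ t, ‖w t‖ ≤ 1) :
    Continuous fun t => GG q a b c d (z t) (w t) := by
  have hqc := qp_cont hq
  unfold GG
  refine Continuous.div (by fun_prop) (by fun_prop) ?_
  intro t
  have hne : ∀ x : ℂ, ‖x‖ < 1 → qp q (x * z t) * qp q (x * w t * q) ≠ 0 := fun x ht =>
    mul_ne_zero (qp_ne hq (nrm_lt ht (hz1 t))) (qp_ne hq (nrm_lt (nrm_lt ht (hw1 t)) hq.le))
  exact (mul_ne_zero (mul_ne_zero (mul_ne_zero (hne a ha) (hne b hb)) (hne c hc)) (hne d hd))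

lemma qp_zero (x : ℂ) : qp 0 x = 1 - x := by
  rw [qp_succ (by simp) x, mul_zero]
  simp [qp]

lemma GG_int {q a b c d : ℂ} (hq : ‖q‖ < 1)
    (ha : ‖a‖ < 1) (hb : ‖b‖ < 1) (hc : ‖c‖ < 1) (hd : ‖d‖ < 1) :
    ∫ θ in (0:ℝ)..2 * Real.pi, GG q a b c d (circleMap 0 1 θ) (circleMap 0 1 θ)⁻¹ = 0 := by
  have hn : ∀ θ : ℝ, ‖circleMap 0 1 θ‖ = 1 := by intro θ; simp
  have hne : ∀ θ : ℝ, circleMap 0 1 θ ≠ 0 := fun θ => circleMap_ne_center one_ne_zero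
  by_cases hq0 : q = 0
  · subst hq0
    have hne2 : ∀ z : ℂ, ‖z‖ ≤ 1 → (1 - a * z) * (1 - b * z) * (1 - c * z) * (1 - d * z) ≠ 0 := by
      intro z hz
      have : ∀ x : ℂ, ‖x‖ < 1 → 1 - x * z ≠ 0 := by
        intro x hx h
        have := nrm_lt hx hz
        rw [← sub_eq_zero.1 h] at this
        simp at this
      exact mul_ne_zero (mul_ne_zero (mul_ne_zero (this a ha) (this b hb)) (this c hc)) (this d hd)
    have e : ∀ z w : ℂ, GG 0 a b c d z w =
        z * (1 - z ^ 2) / ((1 - a * z) * (1 - b * z) * (1 - c * z) * (1 - d * z)) := by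
      intro z w; simp [GG, qp_zero]
    simp only [e]
    have hD : ∀ z : ℂ, ‖z‖ ≤ 1 → DifferentiableAt ℂ (fun z : ℂ =>
        z * (1 - z ^ 2) / ((1 - a * z) * (1 - b * z) * (1 - c * z) * (1 - d * z))) z := by
      intro z hz
      exact DifferentiableAt.div (by fun_prop) (by fun_prop) (hne2 z hz)
    have h := Complex.circleIntegral_sub_center_inv_smul_of_differentiable_on_off_countable
      (R := 1) one_pos (c := 0) (f := fun z : ℂ =>
        z * (1 - z ^ 2) / ((1 - a * z) * (1 - b * z) * (1 - c * z) * (1 - d * z))) (s := ∅)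
        Set.countable_empty
        (fun z hz => (hD z (by simpa using hz)).continuousAt.continuousWithinAt)
        (fun z hz => hD z (by simpa using (le_of_lt (by simpa using hz) : ‖z‖ ≤ 1)))
    rw [circ_eq _ one_ne_zero] at h
    simpa using h
  · have hcF : ∀ g : ℝ → ℂ, Continuous g → (∀ θ, g θ ≠ 0 ∧ ‖g θ‖ ≤ 1 ∧ ‖q‖ ≤ ‖g θ‖) →
        Continuous fun θ => FF q a b c d (g θ) := by
      intro g hg h
      rw [continuous_iff_continuousAt]
      intro θ
      exact (FF_diff hq ha hb hc hd (h θ).1 (h θ).2.1 (h θ).2.2).continuousAt.comp hg.continuousAt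
    have hci : Continuous fun θ : ℝ => (circleMap 0 1 θ)⁻¹ := (continuous_circleMap 0 1).inv₀ hne
    have h1 := hcF _ (continuous_circleMap 0 1) (fun θ => ⟨hne θ, (hn θ).le, by rw [hn]; exact hq.le⟩)
    have h2 := hcF (fun θ => q * (circleMap 0 1 θ)⁻¹) (continuous_const.mul hci)
      (fun θ => ⟨mul_ne_zero hq0 (inv_ne_zero (hne θ)), by
        rw [norm_mul, norm_inv, hn]; simpa using hq.le, by rw [norm_mul, norm_inv, hn]; simp⟩)
    have e : ∀ θ : ℝ, GG q a b c d (circleMap 0 1 θ) (circleMap 0 1 θ)⁻¹ =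
        FF q a b c d (circleMap 0 1 θ) - FF q a b c d (q * (circleMap 0 1 θ)⁻¹) := by
      intro θ
      rw [GG_FF hq, FF_inv hq0 (hne θ)]
    simp only [e]
    rw [intervalIntegral.integral_sub (h1.intervalIntegrable _ _) (h2.intervalIntegrable _ _),
      FF_int hq hq0 ha hb hc hd, sub_self]

noncomputable def zz (θ : ℝ) : ℂ := Complex.exp ((θ : ℂ) * Complex.I)
noncomputable def ww (θ : ℝ) : ℂ := Complex.exp (-((θ : ℂ) * Complex.I))

lemma zz_cont : Continuous zz := by unfold zz; fun_prop
lemma ww_cont : Continuous ww := by unfold ww; fun_prop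
lemma zz_norm (θ : ℝ) : ‖zz θ‖ = 1 := Complex.norm_exp_ofReal_mul_I θ
lemma zz_ww (θ : ℝ) : zz θ * ww θ = 1 := by
  unfold zz ww; rw [← Complex.exp_add]; simp
lemma ww_eq (θ : ℝ) : ww θ = (zz θ)⁻¹ := eq_inv_of_mul_eq_one_right (zz_ww θ)
lemma ww_norm (θ : ℝ) : ‖ww θ‖ = 1 := by rw [ww_eq, norm_inv, zz_norm, inv_one]
lemma circ_zz (θ : ℝ) : circleMap 0 1 θ = zz θ := by simp [circleMap, zz]

noncomputable def II (q a b c d : ℂ) : ℂ :=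
  ∫ θ in (0:ℝ)..Real.pi, SS q a b c d (zz θ) (ww θ)

lemma SS_cont {X : Type*} [TopologicalSpace X] {q : ℂ} (hq : ‖q‖ < 1) {a b c d z w : X → ℂ}
    (ha : ∀ x, ‖a x‖ < 1) (hb : ∀ x, ‖b x‖ < 1) (hc : ∀ x, ‖c x‖ < 1) (hd : ∀ x, ‖d x‖ < 1)
    (hz1 : ∀ t, ‖z t‖ ≤ 1) (hw1 : ∀ t, ‖w t‖ ≤ 1)
    (ca : Continuous a) (cb : Continuous b) (cc : Continuous c) (cd : Continuous d)
    (hz : Continuous z) (hw : Continuous w) :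
    Continuous fun t => SS q (a t) (b t) (c t) (d t) (z t) (w t) := by
  have hqc := qp_cont hq
  unfold SS
  refine Continuous.div (by fun_prop) (by fun_prop) ?_
  intro t
  have hne : ∀ x : ℂ, ‖x‖ < 1 → qp q (x * z t) * qp q (x * w t) ≠ 0 := fun x ht =>
    mul_ne_zero (qp_ne hq (nrm_lt ht (hz1 t))) (qp_ne hq (nrm_lt ht (hw1 t)))
  exact (mul_ne_zero (mul_ne_zero (mul_ne_zero (hne _ (ha t)) (hne _ (hb t))) (hne _ (hc t)))
    (hne _ (hd t)))

lemma II_mom {q a b c d : ℂ} (hq : ‖q‖ < 1)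
    (ha : ‖a‖ < 1) (hb : ‖b‖ < 1) (hc : ‖c‖ < 1) (hd : ‖d‖ < 1) :
    ∫ θ in (0:ℝ)..Real.pi, SS q a b c d (zz θ) (ww θ) *
      ((1 - a * b * c * d) * (zz θ + ww θ) -
        (a + b + c + d - (a * b * c + a * b * d + a * c * d + b * c * d))) = 0 := by
  have h := GG_int hq ha hb hc hd
  simp only [circ_zz, ← ww_eq] at h
  have c1 := GG_cont hq ha hb hc hd zz_cont ww_cont (fun t => (zz_norm t).le) (fun t => (ww_norm t).le)
  have c2 := GG_cont hq ha hb hc hd ww_cont zz_cont (fun t => (ww_norm t).le) (fun t => (zz_norm t).le)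
  rw [← intervalIntegral.integral_add_adjacent_intervals (c1.intervalIntegrable 0 Real.pi)
    (c1.intervalIntegrable Real.pi (2 * Real.pi))] at h
  have e : ∫ θ in Real.pi..2 * Real.pi, GG q a b c d (zz θ) (ww θ) =
      ∫ θ in (0:ℝ)..Real.pi, GG q a b c d (ww θ) (zz θ) := by
    have := intervalIntegral.integral_comp_sub_left (a := 0) (b := Real.pi)
      (fun θ => GG q a b c d (zz θ) (ww θ)) (2 * Real.pi)
    have e1 : ∀ θ : ℝ, zz (2 * Real.pi - θ) = ww θ := by
      intro θ
      unfold zz ww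
      have : ((2 * Real.pi - θ : ℝ) : ℂ) * I = -((θ : ℂ) * I) + 2 * Real.pi * I := by
        push_cast; ring
      rw [this, Complex.exp_add, Complex.exp_two_pi_mul_I, mul_one]
    have e2 : ∀ θ : ℝ, ww (2 * Real.pi - θ) = zz θ := by
      intro θ
      rw [ww_eq, e1, ww_eq, inv_inv]
    simp only [e1, e2] at this
    rw [this]
    congr 1 <;> ring
  rw [e, ← intervalIntegral.integral_add (c1.intervalIntegrable _ _) (c2.intervalIntegrable _ _)] at h
  rw [← h]
  congr 1
  funext θ
  exact (GG_sym hq ha hb hc hd (zz_norm θ).le (ww_norm θ).le (zz_ww θ)).symm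

lemma SS_q {q a b c d z w : ℂ} (hq : ‖q‖ < 1) (ha : ‖a‖ < 1) (hz : ‖z‖ ≤ 1) (hw : ‖w‖ ≤ 1) :
    SS q (a * q) b c d z w = SS q a b c d z w * ((1 - a * z) * (1 - a * w)) := by
  have h1 := qp_succ hq (a * z)
  have h2 := qp_succ hq (a * w)
  have n1 := qp_ne hq (nrm_lt ha hz)
  have n2 := qp_ne hq (nrm_lt ha hw)
  rw [h1] at n1
  rw [h2] at n2
  have n3 := left_ne_zero_of_mul n1
  have n4 := left_ne_zero_of_mul n2
  unfold SS
  rw [h1, h2, mul_right_comm a q z, mul_right_comm a q w, div_mul_eq_mul_div,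
    ← mul_div_mul_right _ _ (mul_ne_zero n3 n4)]
  congr 1
  ring

lemma II_q {q a b c d : ℂ} (hq : ‖q‖ < 1)
    (ha : ‖a‖ < 1) (hb : ‖b‖ < 1) (hc : ‖c‖ < 1) (hd : ‖d‖ < 1) :
    (1 - a * b * c * d) * II q (a * q) b c d =
      (1 - a * b) * (1 - a * c) * (1 - a * d) * II q a b c d := by
  have hm := II_mom hq ha hb hc hd
  have cS : Continuous fun θ => SS q a b c d (zz θ) (ww θ) :=
    SS_cont hq (fun _ => ha) (fun _ => hb) (fun _ => hc) (fun _ => hd) (fun t => (zz_norm t).le)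
      (fun t => (ww_norm t).le) continuous_const continuous_const continuous_const continuous_const
      zz_cont ww_cont
  have cM : Continuous fun θ => SS q a b c d (zz θ) (ww θ) *
      ((1 - a * b * c * d) * (zz θ + ww θ) -
        (a + b + c + d - (a * b * c + a * b * d + a * c * d + b * c * d))) := by
    have := zz_cont
    have := ww_cont
    fun_prop
  have key : ∫ θ in (0:ℝ)..Real.pi, (1 - a * b * c * d) * SS q (a * q) b c d (zz θ) (ww θ) =
      ∫ θ in (0:ℝ)..Real.pi, ((1 - a * b) * (1 - a * c) * (1 - a * d) * SS q a b c d (zz θ) (ww θ)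
        - a * (SS q a b c d (zz θ) (ww θ) *
      ((1 - a * b * c * d) * (zz θ + ww θ) -
        (a + b + c + d - (a * b * c + a * b * d + a * c * d + b * c * d))))) := by
    congr 1
    funext θ
    rw [SS_q hq ha (zz_norm θ).le (ww_norm θ).le]
    have := zz_ww θ
    linear_combination (1 - a * b * c * d) * SS q a b c d (zz θ) (ww θ) * a ^ 2 * this
  rw [intervalIntegral.integral_sub ((cS.const_mul _).intervalIntegrable _ _)
    ((cM.const_mul _).intervalIntegrable _ _), intervalIntegral.integral_const_mul,
    intervalIntegral.integral_const_mul, intervalIntegral.integral_const_mul, hm] at key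
  unfold II
  rw [key]
  ring

noncomputable def JJ (q a b c d : ℂ) : ℂ :=
  II q a b c d * (qp q (a * b) * qp q (a * c) * qp q (a * d) *
          qp q (b * c) * qp q (b * d) * qp q (c * d)) / qp q (a * b * c * d)

lemma JJ_cyc (q a b c d : ℂ) : JJ q a b c d = JJ q b c d a := by
  have h : II q a b c d = II q b c d a := by
    unfold II SS
    congr 1
    funext θ
    congr 1
    ring
  unfold JJ
  rw [h, mul_comm b a, mul_comm c a, mul_comm d a,
    (by ring : b * c * d * a = a * b * c * d)]
  congr 1
  ring

lemma nrm_lt4 {a b c d : ℂ} (ha : ‖a‖ < 1) (hb : ‖b‖ < 1) (hc : ‖c‖ < 1) (hd : ‖d‖ < 1) :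
    ‖a * b * c * d‖ < 1 := nrm_lt (nrm_lt (nrm_lt ha hb.le) hc.le) hd.le

lemma JJ_q {q a b c d : ℂ} (hq : ‖q‖ < 1)
    (ha : ‖a‖ < 1) (hb : ‖b‖ < 1) (hc : ‖c‖ < 1) (hd : ‖d‖ < 1) :
    JJ q a b c d = JJ q b c d (a * q) := by
  rw [← JJ_cyc q (a * q) b c d]
  have h := II_q hq ha hb hc hd
  have n := qp_ne hq (nrm_lt4 ha hb hc hd)
  unfold JJ
  rw [qp_succ hq (a * b * c * d)] at n ⊢
  rw [qp_succ hq (a * b), qp_succ hq (a * c), qp_succ hq (a * d),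
    mul_right_comm a q b, mul_right_comm a q c, mul_right_comm a q d,
    mul_right_comm (a * b) q c, mul_right_comm (a * b * c) q d]
  have n1 := left_ne_zero_of_mul n
  have n2 := right_ne_zero_of_mul n
  rw [div_eq_div_iff n n2]
  linear_combination -h * qp q (a * b * q) * qp q (a * c * q) * qp q (a * d * q) *
    (qp q (b * c) * qp q (b * d) * qp q (c * d)) * qp q (a * b * c * d * q)

lemma JJ_q4 {q a b c d : ℂ} (hq : ‖q‖ < 1)
    (ha : ‖a‖ < 1) (hb : ‖b‖ < 1) (hc : ‖c‖ < 1) (hd : ‖d‖ < 1) :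
    JJ q a b c d = JJ q (a * q) (b * q) (c * q) (d * q) := by
  rw [JJ_q hq ha hb hc hd, JJ_q hq hb hc hd (nrm_lt ha hq.le),
    JJ_q hq hc hd (nrm_lt ha hq.le) (nrm_lt hb hq.le),
    JJ_q hq hd (nrm_lt ha hq.le) (nrm_lt hb hq.le) (nrm_lt hc hq.le)]

lemma JJ_qn {q a b c d : ℂ} (hq : ‖q‖ < 1)
    (ha : ‖a‖ < 1) (hb : ‖b‖ < 1) (hc : ‖c‖ < 1) (hd : ‖d‖ < 1) (n : ℕ) :
    JJ q a b c d = JJ q (a * q ^ n) (b * q ^ n) (c * q ^ n) (d * q ^ n) := by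
  induction n with
  | zero => simp
  | succ n ih =>
    have hn : ‖q ^ n‖ ≤ 1 := by rw [norm_pow]; exact pow_le_one₀ (norm_nonneg _) hq.le
    rw [ih, JJ_q4 hq (nrm_lt ha hn) (nrm_lt hb hn) (nrm_lt hc hn) (nrm_lt hd hn)]
    simp only [pow_succ, mul_assoc]

lemma JJ_zero {q a b c d : ℂ} (hq : ‖q‖ < 1)
    (ha : ‖a‖ < 1) (hb : ‖b‖ < 1) (hc : ‖c‖ < 1) (hd : ‖d‖ < 1) :
    JJ q a b c d = JJ q 0 0 0 0 := by
  have hqc := qp_cont hq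
  let X := Metric.closedBall (0 : ℂ) 1
  have hX : ∀ x : X, ‖(x : ℂ)‖ ≤ 1 := fun x => mem_closedBall_zero_iff.1 x.2
  have cI : Continuous fun s : X => II q (a * s) (b * s) (c * s) (d * s) := by
    unfold II
    apply intervalIntegral.continuous_parametric_intervalIntegral_of_continuous'
    exact SS_cont (X := X × ℝ) hq (fun x => nrm_lt ha (hX x.1)) (fun x => nrm_lt hb (hX x.1))
      (fun x => nrm_lt hc (hX x.1)) (fun x => nrm_lt hd (hX x.1))
      (fun t => (zz_norm t.2).le) (fun t => (ww_norm t.2).le) (by fun_prop) (by fun_prop)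
      (by fun_prop) (by fun_prop) (zz_cont.comp continuous_snd) (ww_cont.comp continuous_snd)
  have cJ : Continuous fun s : X => JJ q (a * s) (b * s) (c * s) (d * s) := by
    unfold JJ
    refine Continuous.div (by fun_prop) (by fun_prop) ?_
    intro x
    exact qp_ne hq (nrm_lt4 (nrm_lt ha (hX x)) (nrm_lt hb (hX x)) (nrm_lt hc (hX x))
      (nrm_lt hd (hX x)))
  let s : ℕ → X := fun n => ⟨q ^ n, by
    rw [Metric.mem_closedBall, dist_zero_right, norm_pow]
    exact pow_le_one₀ (norm_nonneg _) hq.le⟩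
  have hs : Filter.Tendsto s Filter.atTop (nhds ⟨0, Metric.mem_closedBall_self zero_le_one⟩) := by
    rw [tendsto_subtype_rng]
    exact tendsto_pow_atTop_nhds_zero_of_norm_lt_one hq
  have h := (cJ.tendsto _).comp hs
  have h2 : (fun s : X => JJ q (a * s) (b * s) (c * s) (d * s)) ∘ s = fun _ => JJ q a b c d := by
    funext n
    exact (JJ_qn hq ha hb hc hd n).symm
  rw [h2] at h
  have := tendsto_nhds_unique tendsto_const_nhds h
  simpa using this

lemma II_base {q u : ℂ} (hq : ‖q‖ < 1) (hu : u ^ 2 = q) (hu1 : ‖u‖ < 1) :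
    II q q (-q) u (-u) = 2 * Real.pi := by
  have key : ∀ θ : ℝ, SS q q (-q) u (-u) (zz θ) (ww θ) = ((4 * Real.sin θ ^ 2 : ℝ) : ℂ) := by
    intro θ
    have hs : SS q q (-q) u (-u) (zz θ) (ww θ) = (1 - zz θ ^ 2) * (1 - ww θ ^ 2) := by
      have e : ∀ z : ℂ, qp q (z ^ 2) =
          (1 - z ^ 2) * (qp q (q * z) * qp q (-q * z) * qp q (u * z) * qp q (-u * z)) := by
        intro z
        rw [← qp_dup hq hu, qp_succ hq z, qp_succ hq (-z), mul_comm z q,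
          (by ring : -z * q = -q * z)]
        ring
      have n : ∀ t : ℂ, ‖t‖ < 1 → qp q (t * zz θ) * qp q (t * ww θ) ≠ 0 := fun t ht =>
        mul_ne_zero (qp_ne hq (nrm_lt ht (zz_norm θ).le)) (qp_ne hq (nrm_lt ht (ww_norm θ).le))
      have n1 := mul_ne_zero (mul_ne_zero (mul_ne_zero (n q hq) (n (-q) (by simpa using hq)))
        (n u hu1)) (n (-u) (by simpa using hu1))
      unfold SS
      rw [div_eq_iff n1, e, e]
      ring
    have hz : zz θ = Real.cos θ + Real.sin θ * I := by
      unfold zz; rw [Complex.exp_mul_I]; push_cast; rfl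
    have hw : ww θ = Real.cos θ - Real.sin θ * I := by
      unfold ww
      rw [← neg_mul, Complex.exp_mul_I, Complex.cos_neg, Complex.sin_neg]; push_cast; ring
    have h1 := zz_ww θ
    have h2 : (zz θ - ww θ) ^ 2 = -4 * (Real.sin θ : ℂ) ^ 2 := by
      rw [hz, hw]
      linear_combination 4 * (Real.sin θ : ℂ) ^ 2 * I_sq
    rw [hs]
    push_cast at h2 ⊢
    linear_combination (zz θ * ww θ - 1) * h1 - h2
  unfold II
  simp only [key]
  rw [intervalIntegral.integral_ofReal, intervalIntegral.integral_const_mul, integral_sin_sq]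
  push_cast
  simp
  ring

/-- The Askey–Wilson integral. -/
theorem askey_wilson_integral (q u a b c d : ℂ) (hq : ‖q‖ < 1) (hu : u ^ 2 = q)
    (ha : ‖a‖ < 1) (hb : ‖b‖ < 1) (hc : ‖c‖ < 1) (hd : ‖d‖ < 1) :
    ∫ θ in (0:ℝ)..Real.pi,
      (hh q θ 1 * hh q θ (-1) * hh q θ u * hh q θ (-u)) /
        (hh q θ a * hh q θ b * hh q θ c * hh q θ d)
      = 2 * (Real.pi : ℂ) * qp q (a * b * c * d) /
        (qp q q * qp q (a * b) * qp q (a * c) * qp q (a * d) *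
          qp q (b * c) * qp q (b * d) * qp q (c * d)) := by
  have hu1 : ‖u‖ < 1 := by
    have : ‖u‖ ^ 2 < 1 := by rw [← norm_pow, hu]; exact hq
    nlinarith [norm_nonneg u]
  have hL : ∫ θ in (0:ℝ)..Real.pi,
      (hh q θ 1 * hh q θ (-1) * hh q θ u * hh q θ (-u)) /
        (hh q θ a * hh q θ b * hh q θ c * hh q θ d) = II q a b c d := by
    unfold II
    congr 1
    funext θ
    unfold SS
    rw [← qp_dup hq hu (zz θ), ← qp_dup hq hu (ww θ)]
    have ez : Complex.exp ((θ : ℂ) * Complex.I) = zz θ := rfl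
    have ew : Complex.exp (-((θ : ℂ) * Complex.I)) = ww θ := rfl
    simp only [hh, ez, ew, one_mul, neg_one_mul]
    congr 1
    ring
  have hqn : ‖-q‖ < 1 := by simpa using hq
  have hun : ‖-u‖ < 1 := by simpa using hu1
  have hJ : JJ q a b c d = JJ q q (-q) u (-u) := by
    rw [JJ_zero hq ha hb hc hd, JJ_zero hq hq hqn hu1 hun]
  have n0 := qp_ne hq hq
  have n1 := qp_ne hq (nrm_lt4 hq hqn hu1 hun)
  have n2 := qp_ne hq (nrm_lt4 ha hb hc hd)
  have m1 := qp_ne hq (nrm_lt ha hb.le)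
  have m2 := qp_ne hq (nrm_lt ha hc.le)
  have m3 := qp_ne hq (nrm_lt ha hd.le)
  have m4 := qp_ne hq (nrm_lt hb hc.le)
  have m5 := qp_ne hq (nrm_lt hb hd.le)
  have m6 := qp_ne hq (nrm_lt hc hd.le)
  have hb' : JJ q q (-q) u (-u) * qp q q = 2 * Real.pi := by
    unfold JJ
    rw [II_base hq hu hu1, div_mul_eq_mul_div, div_eq_iff n1]
    linear_combination -2 * Real.pi * qp_const hq hu
  rw [← hJ] at hb'
  unfold JJ at hb'
  rw [div_mul_eq_mul_div, div_eq_iff n2] at hb'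
  rw [hL, eq_div_iff (by positivity)]
  linear_combination hb'
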